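/- Let ν be a lattice path with m east and n north steps, and let T_max be the subset of A_ν consisting of all points of the top row (y = n) together with the starting points of all north steps of ν. Then every ν-tree can be transformed into T_max by a finite sequence of right rotations; in particular, every ν-tree has exactly m + n + 1 elements, the number of lattice points on ν. -/

import Mathlib

open scoped Classical

/-! Lattice paths: `true` = north step, `false` = east step. -/

def eastSteps (ν : List Bool) : ℕ := ν.count false
def northSteps (ν : List Bool) : ℕ := ν.count true

/-- Height at which the path first reaches abscissa `x`. -/
def heightAt : List Bool → ℕ → ℕ
  | _, 0 => 0
  | [], _ + 1 => 0
  | true :: rest, x + 1 => heightAt rest (x + 1) + 1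
  | false :: rest, x + 1 => heightAt rest x

/-- Lattice point of a path after `i` steps. -/
def pointAt (μ : List Bool) (i : ℕ) : ℕ × ℕ :=
  ((μ.take i).count false, (μ.take i).count true)

/-- The set `A_ν` of lattice points weakly above `ν`. -/
def APts (ν : List Bool) : Set (ℕ × ℕ) :=
  {p | p.1 ≤ eastSteps ν ∧ heightAt ν p.1 ≤ p.2 ∧ p.2 ≤ northSteps ν}

def Incompatible (ν : List Bool) (p q : ℕ × ℕ) : Prop :=
  (p.1 < q.1 ∧ p.2 < q.2 ∧ (q.1, p.2) ∈ APts ν) ∨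
    (q.1 < p.1 ∧ q.2 < p.2 ∧ (p.1, q.2) ∈ APts ν)

def Compatible (ν : List Bool) (p q : ℕ × ℕ) : Prop := ¬ Incompatible ν p q

def IsNuTree (ν : List Bool) (T : Set (ℕ × ℕ)) : Prop :=
  T ⊆ APts ν ∧ T.Pairwise (Compatible ν) ∧
    ∀ T', T' ⊆ APts ν → T'.Pairwise (Compatible ν) → T ⊆ T' → T' = T

def IsRightRotationAt (T T' : Set (ℕ × ℕ)) (q q' : ℕ × ℕ) : Prop :=
  ∃ x y x'' y', q = (x, y) ∧ q' = (x'', y') ∧ x < x'' ∧ y < y' ∧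
    (x, y) ∈ T ∧ (x, y') ∈ T ∧ (x'', y) ∈ T ∧
    (∀ b, y < b → b < y' → (x, b) ∉ T) ∧
    (∀ a, x < a → a < x'' → (a, y) ∉ T) ∧
    (∀ a, x < a → a < x'' → (a, y') ∉ T) ∧
    (∀ b, y < b → b < y' → (x'', b) ∉ T) ∧
    T' = (T \ {(x, y)}) ∪ {(x'', y')}

def IsRightRotation (T T' : Set (ℕ × ℕ)) : Prop :=
  ∃ q q', IsRightRotationAt T T' q q'

/-- Order relation of the rotation poset of ν-trees. -/
def TreeLE (ν : List Bool) : Set (ℕ × ℕ) → Set (ℕ × ℕ) → Prop :=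
  Relation.ReflTransGen fun A B => IsNuTree ν A ∧ IsNuTree ν B ∧ IsRightRotation A B

def IsNuPath (ν μ : List Bool) : Prop :=
  eastSteps μ = eastSteps ν ∧ northSteps μ = northSteps ν ∧
    ∀ i ≤ μ.length, pointAt μ i ∈ APts ν

noncomputable def horiz (ν : List Bool) (p : ℕ × ℕ) : ℕ :=
  sSup {k | (p.1 + k, p.2) ∈ APts ν}

/-- Covering relation of the ν-Tamari lattice. -/
def TamariCover (ν μ μ' : List Bool) : Prop :=
  IsNuPath ν μ ∧ IsNuPath ν μ' ∧
    ∃ i j, 0 < i ∧ i < j ∧ j ≤ μ.length ∧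
      μ.getD (i - 1) true = false ∧ μ.getD i false = true ∧
      horiz ν (pointAt μ j) = horiz ν (pointAt μ i) ∧
      (∀ k, i < k → k < j → horiz ν (pointAt μ k) ≠ horiz ν (pointAt μ i)) ∧
      μ' = μ.take (i - 1) ++ (μ.drop i).take (j - i) ++ [false] ++ μ.drop j

def TamariLE (ν : List Bool) : List Bool → List Bool → Prop :=
  Relation.ReflTransGen (TamariCover ν)

/-! Flushing maps -/

def rowAvail (ν : List Bool) (y : ℕ) : List ℕ :=
  ((List.range (eastSteps ν + 1)).filter fun x => decide (heightAt ν x ≤ y)).reverse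

def pointsAtHeight (μ : List Bool) (y : ℕ) : ℕ :=
  ((List.range (μ.length + 1)).filter fun i => decide ((μ.take i).count true = y)).length

def rflushAux (ν : List Bool) : List ℕ → ℕ → List ℕ → List (ℕ × ℕ)
  | [], _, _ => []
  | c :: rest, y, forbidden =>
    let placed := ((rowAvail ν y).filter fun x => decide (x ∉ forbidden)).take c
    placed.map (fun x => (x, y)) ++ rflushAux ν rest (y + 1) (forbidden ++ placed.dropLast)

/-- Right-flushing map `R`. -/
def Rflush (ν μ : List Bool) : Set (ℕ × ℕ) :=
  {p | p ∈ rflushAux ν ((List.range (northSteps ν + 1)).map (pointsAtHeight μ)) 0 []}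

def lflushAux (m : ℕ) : List ℕ → ℕ → List ℕ → List (ℕ × ℕ)
  | [], _, _ => []
  | c :: rest, y, forbidden =>
    let placed := ((List.range (m + 1)).filter fun x => decide (x ∉ forbidden)).take c
    placed.map (fun x => (x, y)) ++ lflushAux m rest (y + 1) (forbidden ++ placed.dropLast)

noncomputable def rowCount (T : Set (ℕ × ℕ)) (y : ℕ) : ℕ := {x | (x, y) ∈ T}.ncard

/-- Left-flushing map `L`. -/
noncomputable def Lflush (ν : List Bool) (T : Set (ℕ × ℕ)) : Set (ℕ × ℕ) :=
  {p | p ∈ lflushAux (eastSteps ν) ((List.range (northSteps ν + 1)).map (rowCount T)) 0 []}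

def pathPointSet (μ : List Bool) : Set (ℕ × ℕ) := {p | ∃ i ≤ μ.length, pointAt μ i = p}

/-! Bracket vectors (0-indexed positions `0,…,ℓ`). -/

noncomputable def fpos (ν : List Bool) (k : ℕ) : ℕ :=
  sSup {i | i ≤ ν.length ∧ (ν.take i).count true = k}

def bmin (ν : List Bool) : List ℕ :=
  (List.range (ν.length + 1)).map fun i => (ν.take i).count true

def IsBracketVector (ν : List Bool) (b : List ℕ) : Prop :=
  b.length = ν.length + 1 ∧
    (∀ k ≤ northSteps ν, b.getD (fpos ν k) 0 = k) ∧
    (∀ i < b.length, (bmin ν).getD i 0 ≤ b.getD i 0 ∧ b.getD i 0 ≤ northSteps ν) ∧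
    ∀ i j k, i < j → j < k → k < b.length →
      ¬(b.getD i 0 = b.getD k 0 ∧ b.getD i 0 < b.getD j 0)

noncomputable def leftChild (T : Set (ℕ × ℕ)) (p : ℕ × ℕ) : Option (ℕ × ℕ) :=
  if ∃ b, (p.1, b) ∈ T ∧ b < p.2 then some (p.1, sSup {b | (p.1, b) ∈ T ∧ b < p.2})
  else none

noncomputable def rightChild (T : Set (ℕ × ℕ)) (p : ℕ × ℕ) : Option (ℕ × ℕ) :=
  if ∃ a, (a, p.2) ∈ T ∧ p.1 < a then
    if ∃ b, (sInf {a | (a, p.2) ∈ T ∧ p.1 < a}, b) ∈ T ∧ p.2 < b then none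
    else some (sInf {a | (a, p.2) ∈ T ∧ p.1 < a}, p.2)
  else none

noncomputable def inorderAux (T : Set (ℕ × ℕ)) : ℕ → ℕ × ℕ → List (ℕ × ℕ)
  | 0, _ => []
  | fuel + 1, p =>
    (match leftChild T p with
      | none => []
      | some l => inorderAux T fuel l) ++ p ::
      (match rightChild T p with
        | none => []
        | some r => inorderAux T fuel r)

/-- Bracket vector of a ν-tree: y-coordinates read in in-order from the root `(0,n)`. -/
noncomputable def bracketOfTree (ν : List Bool) (T : Set (ℕ × ℕ)) : List ℕ :=
  (inorderAux T T.ncard (0, northSteps ν)).map Prod.snd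

noncomputable def bracketAssign (ν μ : List Bool) : List (ℕ × ℕ) :=
  ((List.range (northSteps ν + 1)).foldl
    (fun (st : List (ℕ × ℕ) × List ℕ) k =>
      let picked := ((st.2.filter fun i => decide (i ≤ fpos ν k)).reverse).take
        (pointsAtHeight μ k)
      (st.1 ++ picked.map fun i => (i, k), st.2.filter fun i => decide (i ∉ picked)))
    ([], List.range (ν.length + 1))).1

/-- Bracket vector of a ν-path. -/
noncomputable def bracketOfPath (ν μ : List Bool) : List ℕ :=
  (List.range (ν.length + 1)).map fun i => ((bracketAssign ν μ).lookup i).getD 0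

/-- Componentwise order on (equal length) integer vectors. -/
def listLE (b b' : List ℕ) : Prop :=
  b.length = b'.length ∧ ∀ i, b.getD i 0 ≤ b'.getD i 0

/-! Reversal -/

def revPath (ν : List Bool) : List Bool := ν.reverse.map fun s => !s

def revTree (ν : List Bool) (T : Set (ℕ × ℕ)) : Set (ℕ × ℕ) :=
  (fun p : ℕ × ℕ => (northSteps ν - p.2, eastSteps ν - p.1)) '' T

/-! Pipe dreams and subword complexes -/

def dOf (ν : List Bool) (p : ℕ × ℕ) : ℕ := p.1 + (northSteps ν - p.2)

def labelPerm (ν : List Bool) (p : ℕ × ℕ) : Equiv.Perm ℕ :=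
  Equiv.swap (dOf ν p + 1) (dOf ν p + 2)

/-- The points of `A_ν` in reading order: rows from bottom to top, each left to right. -/
def readingList (ν : List Bool) : List (ℕ × ℕ) :=
  ((List.range (northSteps ν + 1)).map fun y =>
    ((List.range (eastSteps ν + 1)).filter fun x => decide (heightAt ν x ≤ y)).map
      fun x => (x, y)).flatten

/-- The minimal ν-tree. -/
def TminSet (ν : List Bool) : Set (ℕ × ℕ) :=
  {p | p ∈ APts ν ∧ (p.1 = 0 ∨ ∃ i < ν.length, ν.getD i true = false ∧ p = pointAt ν (i + 1))}

noncomputable def prodOver (ν : List Bool) (C : Set (ℕ × ℕ)) : Equiv.Perm ℕ :=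
  (((readingList ν).filter fun p => decide (p ∈ C)).map (labelPerm ν)).prod

/-- Coxeter length: number of inversions. -/
noncomputable def lenInv (π : Equiv.Perm ℕ) : ℕ :=
  {q : ℕ × ℕ | q.1 < q.2 ∧ π q.2 < π q.1}.ncard

noncomputable def piNu (ν : List Bool) : Equiv.Perm ℕ := prodOver ν (APts ν \ TminSet ν)

def Qword (ν : List Bool) : List (Equiv.Perm ℕ) := (readingList ν).map (labelPerm ν)

noncomputable def prodAt (Q : List (Equiv.Perm ℕ)) (P : Finset ℕ) : Equiv.Perm ℕ :=
  (((List.range Q.length).filter fun i => decide (i ∈ P)).map fun i => Q.getD i 1).prod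

def IsFacet (Q : List (Equiv.Perm ℕ)) (π : Equiv.Perm ℕ) (I : Finset ℕ) : Prop :=
  I ⊆ Finset.range Q.length ∧
    prodAt Q (Finset.range Q.length \ I) = π ∧
    (Finset.range Q.length \ I).card = lenInv π

def IncFlip (Q : List (Equiv.Perm ℕ)) (π : Equiv.Perm ℕ) (I J : Finset ℕ) : Prop :=
  IsFacet Q π I ∧ IsFacet Q π J ∧ ∃ i ∈ I, ∃ j ∈ J, i < j ∧ I.erase i = J.erase j

def FlipLE (Q : List (Equiv.Perm ℕ)) (π : Equiv.Perm ℕ) : Finset ℕ → Finset ℕ → Prop :=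
  Relation.ReflTransGen (IncFlip Q π)

/-- The maximal ν-tree. -/
def TmaxSet (ν : List Bool) : Set (ℕ × ℕ) :=
  {p | (p.1 ≤ eastSteps ν ∧ p.2 = northSteps ν) ∨ ∃ i < ν.length, ν.getD i false = true ∧ p = pointAt ν i}

/-! A `ν`-tree `T` that is not contained in `T_max` has a point in the lowest row meeting
`T \ T_max`; the leftmost such point has a neighbour of `T` to its east and one to its north, so `T`
can be rotated there. A rotation yields another `ν`-tree of the same size and moves one point up, so
that the sum of the distances to the top row drops and rotating must stop at a `ν`-tree contained in
`T_max`. As `T_max` is pairwise compatible, that `ν`-tree is `T_max` by maximality. -/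

variable {ν : List Bool} {T : Set (ℕ × ℕ)} {x x' y y' : ℕ}

theorem finsum_mem_insert_sdiff_singleton_lt {α M : Type*} [AddCommMonoid M] [PartialOrder M]
    [IsOrderedCancelAddMonoid M] {s : Set α} {a b : α} {f : α → M} (hs : s.Finite) (ha : a ∉ s)
    (hb : b ∈ s) (hab : f a < f b) :
    ∑ᶠ i ∈ insert a (s \ {b}), f i < ∑ᶠ i ∈ s, f i := by
  have hfin : (s \ {b}).Finite := hs.sdiff
  calc ∑ᶠ i ∈ insert a (s \ {b}), f i
      = f a + ∑ᶠ i ∈ s \ {b}, f i := finsum_mem_insert f (fun h => ha h.1) hfin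
    _ < f b + ∑ᶠ i ∈ s \ {b}, f i := by gcongr
    _ = ∑ᶠ i ∈ insert b (s \ {b}), f i := (finsum_mem_insert f (fun h => h.2 rfl) hfin).symm
    _ = ∑ᶠ i ∈ s, f i := by rw [Set.insert_sdiff_singleton, Set.insert_eq_of_mem hb]

/-! ### The region above a path -/

@[simp]
theorem heightAt_zero (ν : List Bool) : heightAt ν 0 = 0 := by
  cases ν <;> rfl

theorem monotone_heightAt (ν : List Bool) : Monotone (heightAt ν) := by
  refine monotone_nat_of_le_succ fun x => ?_
  induction ν generalizing x with
  | nil => cases x <;> simp [heightAt]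
  | cons s ν ih =>
    rcases x with _ | x
    · simp
    · cases s
      · simpa [heightAt] using ih x
      · simpa [heightAt] using ih (x + 1)

theorem heightAt_of_eastSteps_lt (hx : eastSteps ν < x) : heightAt ν x = northSteps ν := by
  induction ν generalizing x with
  | nil => cases x <;> simp [heightAt, northSteps]
  | cons s ν ih =>
    obtain ⟨x, rfl⟩ : ∃ k, x = k + 1 := Nat.exists_eq_succ_of_ne_zero (by omega)
    cases s <;> simp_all [heightAt, eastSteps, northSteps]

theorem heightAt_le_northSteps (ν : List Bool) (x : ℕ) : heightAt ν x ≤ northSteps ν :=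
  calc heightAt ν x ≤ heightAt ν (max x (eastSteps ν + 1)) :=
        monotone_heightAt ν (le_max_left _ _)
    _ = northSteps ν := heightAt_of_eastSteps_lt (by omega)

theorem mem_APts_of_le (h : (x, y) ∈ APts ν) (hx : x' ≤ x) (hy : y ≤ y')
    (hy' : y' ≤ northSteps ν) : (x', y') ∈ APts ν :=
  ⟨hx.trans h.1, (monotone_heightAt ν hx).trans (h.2.1.trans hy), hy'⟩

theorem mem_APts_iff_of_lt_northSteps (hy : y < northSteps ν) :
    (x, y) ∈ APts ν ↔ heightAt ν x ≤ y := by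
  refine ⟨fun h => h.2.1, fun h => ⟨?_, h, hy.le⟩⟩
  by_contra! hx
  exact (hy.trans_eq (heightAt_of_eastSteps_lt hx).symm).not_ge h

theorem finite_APts (ν : List Bool) : (APts ν).Finite :=
  (Set.finite_Iic (eastSteps ν, northSteps ν)).subset fun _ h => ⟨h.1, h.2.2⟩

/-! ### The maximal tree -/

/-- The starting points of the north steps of `ν`: the points of `T_max` that `TmaxSet` lists beside
the top row. -/
def northStarts (ν : List Bool) : Set (ℕ × ℕ) :=
  {p | ∃ i < ν.length, ν.getD i false = true ∧ p = pointAt ν i}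

theorem northStarts_false_cons (ν : List Bool) :
    northStarts (false :: ν) = (fun p => (p.1 + 1, p.2)) '' northStarts ν := by
  ext p
  simp only [northStarts, Set.mem_ofPred_eq, List.length_cons, Nat.exists_lt_succ_left]
  simp [pointAt, and_assoc, eq_comm (a := p)]

theorem northStarts_true_cons (ν : List Bool) :
    northStarts (true :: ν) = insert (0, 0) ((fun p => (p.1, p.2 + 1)) '' northStarts ν) := by
  ext p
  simp only [northStarts, Set.mem_ofPred_eq, List.length_cons, Nat.exists_lt_succ_left]
  simp [pointAt, and_assoc, eq_comm (a := p)]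

theorem mem_northStarts_iff :
    (x, y) ∈ northStarts ν ↔ heightAt ν x ≤ y ∧ y < heightAt ν (x + 1) := by
  induction ν generalizing x y with
  | nil => simp [northStarts, heightAt]
  | cons s ν ih =>
    cases s
    · cases x <;> simp [northStarts_false_cons, heightAt, ih]
    · cases x <;> cases y <;> simp [northStarts_true_cons, heightAt, ih]

theorem lt_northSteps_of_mem_northStarts (h : (x, y) ∈ northStarts ν) : y < northSteps ν :=
  (mem_northStarts_iff.1 h).2.trans_le (heightAt_le_northSteps ν _)

theorem mem_TmaxSet_iff {p : ℕ × ℕ} :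
    p ∈ TmaxSet ν ↔ p ∈ APts ν ∧ (p.2 < northSteps ν → (p.1 + 1, p.2) ∉ APts ν) := by
  obtain ⟨x, y⟩ := p
  change (x ≤ eastSteps ν ∧ y = northSteps ν) ∨ (x, y) ∈ northStarts ν ↔ _
  rcases lt_trichotomy y (northSteps ν) with hy | rfl | hy
  · simp [mem_northStarts_iff, mem_APts_iff_of_lt_northSteps hy, hy, hy.ne]
  · have hx : (x, northSteps ν) ∉ northStarts ν :=
      fun h => (lt_northSteps_of_mem_northStarts h).false
    simp [hx, APts, heightAt_le_northSteps]
  · have hx : (x, y) ∉ northStarts ν := fun h => hy.not_gt (lt_northSteps_of_mem_northStarts h)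
    simp [hx, APts, hy.not_ge, hy.ne']

theorem bijOn_snd_northStarts (ν : List Bool) :
    Set.BijOn Prod.snd (northStarts ν) (Set.Iio (northSteps ν)) := by
  refine ⟨fun p hp => lt_northSteps_of_mem_northStarts hp, ?_, fun y hy => ?_⟩
  · rintro ⟨x, y⟩ hx ⟨x', _⟩ hx' rfl
    have hdisj := (monotone_heightAt ν).pairwise_disjoint_on_Ico_succ
    refine Prod.ext (hdisj.eq (Set.not_disjoint_iff.2 ⟨y, ?_, ?_⟩)) rfl
    · exact mem_northStarts_iff.1 hx
    · exact mem_northStarts_iff.1 hx'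
  · have hlast : y < heightAt ν (eastSteps ν + 1) := by
      rwa [heightAt_of_eastSteps_lt (Nat.lt_succ_self _)]
    obtain ⟨x, hx, hx'⟩ := Nat.exists_not_and_succ_of_not_zero_of_exists
      (p := fun x => y < heightAt ν x) (by simp) ⟨_, hlast⟩
    exact ⟨(x, y), mem_northStarts_iff.2 ⟨not_lt.1 hx, hx'⟩, rfl⟩

theorem ncard_TmaxSet (ν : List Bool) :
    (TmaxSet ν).ncard = eastSteps ν + northSteps ν + 1 := by
  have hunion : TmaxSet ν = Set.Iic (eastSteps ν) ×ˢ {northSteps ν} ∪ northStarts ν := rfl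
  have hdisj : Disjoint (Set.Iic (eastSteps ν) ×ˢ {northSteps ν}) (northStarts ν) :=
    Set.disjoint_left.2 fun p hp hp' => (lt_northSteps_of_mem_northStarts hp').ne hp.2
  have hfin : (northStarts ν).Finite :=
    (bijOn_snd_northStarts ν).finite_iff_finite.2 (Set.finite_Iio _)
  rw [hunion, Set.ncard_union_eq hdisj ((Set.finite_Iic _).prod (Set.finite_singleton _)) hfin,
    Set.ncard_prod, (bijOn_snd_northStarts ν).ncard_eq]
  simp [Set.ncard_eq_toFinset_card', add_right_comm]

/-! ### Compatibility and trees -/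

instance : Std.Refl (Compatible ν) where
  refl p := by simp [Compatible, Incompatible]

instance : Std.Symm (Compatible ν) where
  symm _ _ h := fun h' => h h'.symm

theorem Compatible.corner_notMem (h : Compatible ν (x, y) (x', y')) (hx : x < x') (hy : y < y') :
    (x', y) ∉ APts ν :=
  fun hA => h (Or.inl ⟨hx, hy, hA⟩)

theorem isNuTree_iff :
    IsNuTree ν T ↔ ∀ p, p ∈ T ↔ p ∈ APts ν ∧ ∀ t ∈ T, Compatible ν p t := by
  constructor
  · rintro ⟨hA, hpair, hmax⟩ p
    refine ⟨fun hp => ⟨hA hp, fun t ht => hpair.of_refl hp ht⟩, fun ⟨hpA, hp⟩ => ?_⟩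
    have hpair' : (insert p T).Pairwise (Compatible ν) :=
      Set.pairwise_insert_of_symm.2 ⟨hpair, fun t ht _ => hp t ht⟩
    rw [← hmax _ (Set.insert_subset hpA hA) hpair' (Set.subset_insert p T)]
    exact Set.mem_insert p T
  · refine fun h => ⟨fun p hp => ((h p).1 hp).1, fun p hp t ht _ => ((h p).1 hp).2 t ht, ?_⟩
    intro T' hA hpair hTT'
    exact Set.Subset.antisymm
      (fun p hp => (h p).2 ⟨hA hp, fun t ht => hpair.of_refl hp (hTT' ht)⟩) hTT'

theorem pairwise_compatible_TmaxSet (ν : List Bool) : (TmaxSet ν).Pairwise (Compatible ν) := by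
  have not_southwest {p q : ℕ × ℕ} (hp : p ∈ TmaxSet ν) (hq : q ∈ TmaxSet ν)
      (hx : p.1 < q.1) (hy : p.2 < q.2) : (q.1, p.2) ∉ APts ν := fun hA =>
    (mem_TmaxSet_iff.1 hp).2 (hy.trans_le (mem_TmaxSet_iff.1 hq).1.2.2)
      (mem_APts_of_le hA hx le_rfl hA.2.2)
  rintro p hp q hq - (⟨hx, hy, hA⟩ | ⟨hx, hy, hA⟩)
  · exact not_southwest hp hq hx hy hA
  · exact not_southwest hq hp hx hy hA

namespace IsNuTree

theorem compatible (hT : IsNuTree ν T) {p q : ℕ × ℕ} (hp : p ∈ T) (hq : q ∈ T) :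
    Compatible ν p q :=
  ((isNuTree_iff.1 hT p).1 hp).2 q hq

theorem mem_of_compatible (hT : IsNuTree ν T) {p : ℕ × ℕ} (hpA : p ∈ APts ν)
    (hp : ∀ t ∈ T, Compatible ν p t) : p ∈ T :=
  (isNuTree_iff.1 hT p).2 ⟨hpA, hp⟩

theorem finite (hT : IsNuTree ν T) : T.Finite :=
  (finite_APts ν).subset hT.1

theorem eq_TmaxSet_of_subset (hT : IsNuTree ν T) (h : T ⊆ TmaxSet ν) : T = TmaxSet ν :=
  (hT.2.2 _ (fun _ hp => (mem_TmaxSet_iff.1 hp).1) (pairwise_compatible_TmaxSet ν) h).symm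

theorem exchange (hT : IsNuTree ν T) {q q' : ℕ × ℕ} (hq' : q' ∈ APts ν)
    (hqq' : Incompatible ν q q') (hTq' : ∀ t ∈ T, t ≠ q → Compatible ν t q')
    (huniq : ∀ p ∈ APts ν, (∀ t ∈ T, t ≠ q → Compatible ν p t) → Incompatible ν p q → p = q') :
    IsNuTree ν (insert q' (T \ {q})) := by
  refine isNuTree_iff.2 fun p => ⟨?_, fun ⟨hpA, hp⟩ => ?_⟩
  · rintro (rfl | ⟨hp, hpq⟩)
    · exact ⟨hq', Set.forall_mem_insert.2 ⟨refl _, fun t ht => symm (hTq' t ht.1 ht.2)⟩⟩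
    · exact ⟨hT.1 hp, Set.forall_mem_insert.2 ⟨hTq' p hp hpq, fun t ht => hT.compatible hp ht.1⟩⟩
  · rw [Set.forall_mem_insert] at hp
    by_cases hpq : Incompatible ν p q
    · exact Or.inl (huniq p hpA (fun t ht htq => hp.2 t ⟨ht, htq⟩) hpq)
    · refine Or.inr ⟨hT.mem_of_compatible hpA fun t ht => ?_, ?_⟩
      · by_cases htq : t = q
        · exact htq ▸ hpq
        · exact hp.2 t ⟨ht, htq⟩
      · rintro rfl
        exact hp.1 hqq'

end IsNuTree

/-! ### Rotations -/

/-- `(x, y)` is a point of `T` at which `T` can be rotated to `(x', y')`: the next points of `T`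
north and east of `(x, y)` are `(x, y')` and `(x', y)`. In a `ν`-tree the two remaining emptiness
conditions of `IsRightRotationAt` then hold automatically. -/
structure IsRotatable (T : Set (ℕ × ℕ)) (x y x' y' : ℕ) : Prop where
  lt_east : x < x'
  lt_north : y < y'
  mem : (x, y) ∈ T
  mem_north : (x, y') ∈ T
  mem_east : (x', y) ∈ T
  north_gap : ∀ b, y < b → b < y' → (x, b) ∉ T
  east_gap : ∀ a, x < a → a < x' → (a, y) ∉ T

namespace IsNuTree

variable {a b : ℕ}

theorem mem_column_of_compatible (hT : IsNuTree ν T) (hq : (x, y) ∈ T) (hn : (x, y') ∈ T)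
    (hA : (a, y) ∈ APts ν) (hyb : y < b) (hby' : b < y')
    (hp : ∀ t ∈ T, t ≠ (x, y) → Compatible ν (a, b) t) : (x, b) ∈ T := by
  have hxA : (x, b) ∈ APts ν :=
    mem_APts_of_le (hT.1 hq) le_rfl hyb.le (hby'.le.trans (hT.1 hn).2.2)
  refine hT.mem_of_compatible hxA ?_
  rintro ⟨c, d⟩ ht (⟨hxc, hbd, hcA⟩ | ⟨hcx, hdb, hcA⟩)
  · by_cases hca : c ≤ a
    · exact (hT.compatible hq ht).corner_notMem hxc (hyb.trans hbd)
        (mem_APts_of_le hA hca le_rfl hA.2.2)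
    · exact (hp _ ht (by simp [hxc.ne'])).corner_notMem (not_le.1 hca) hbd hcA
  · exact (hT.compatible ht hn).corner_notMem hcx (hdb.trans hby') hcA

theorem mem_row_of_compatible (hT : IsNuTree ν T) (hq : (x, y) ∈ T) (hA : (a, y) ∈ APts ν)
    (hxa : x < a) (hyb : y < b) (hp : ∀ t ∈ T, t ≠ (x, y) → Compatible ν (a, b) t) :
    (a, y) ∈ T := by
  refine hT.mem_of_compatible hA ?_
  rintro ⟨c, d⟩ ht (⟨hac, hyd, hcA⟩ | ⟨hca, hdy, hcA⟩)
  · exact (hT.compatible hq ht).corner_notMem (hxa.trans hac) hyd hcA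
  · exact (symm (hp _ ht (by simp [hdy.ne]))).corner_notMem hca (hdy.trans hyb) hcA

end IsNuTree

namespace IsRotatable

theorem corner_mem_APts (h : IsRotatable T x y x' y') (hT : IsNuTree ν T) : (x', y') ∈ APts ν :=
  mem_APts_of_le (hT.1 h.mem_east) le_rfl h.lt_north.le (hT.1 h.mem_north).2.2

theorem incompatible (h : IsRotatable T x y x' y') (hT : IsNuTree ν T) :
    Incompatible ν (x, y) (x', y') :=
  Or.inl ⟨h.lt_east, h.lt_north, hT.1 h.mem_east⟩

theorem corner_notMem (h : IsRotatable T x y x' y') (hT : IsNuTree ν T) : (x', y') ∉ T :=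
  fun hmem => hT.compatible h.mem hmem (h.incompatible hT)

theorem compatible_corner (h : IsRotatable T x y x' y') (hT : IsNuTree ν T) {t : ℕ × ℕ}
    (ht : t ∈ T) (htq : t ≠ (x, y)) : Compatible ν t (x', y') := by
  obtain ⟨c, d⟩ := t
  rintro (⟨hcx, hdy, hA⟩ | ⟨hcx, hdy, hA⟩)
  · have hyd : y ≤ d := by
      by_contra! hdy'
      exact (hT.compatible ht h.mem_east).corner_notMem hcx hdy' hA
    have hxc : x ≤ c := by
      by_contra! hcx'
      exact (hT.compatible ht h.mem_north).corner_notMem hcx' hdy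
        (mem_APts_of_le hA h.lt_east.le le_rfl hA.2.2)
    rcases hxc.eq_or_lt with rfl | hxc
    · exact h.north_gap d (hyd.lt_of_ne fun hy => htq (by rw [hy])) hdy ht
    rcases hyd.eq_or_lt with rfl | hyd
    · exact h.east_gap c hxc hcx ht
    · have heA := hT.1 h.mem_east
      exact (hT.compatible h.mem ht).corner_notMem hxc hyd
        (mem_APts_of_le heA hcx.le le_rfl heA.2.2)
  · exact (hT.compatible h.mem_north ht).corner_notMem (h.lt_east.trans hcx) hdy hA

theorem eq_corner_of_incompatible (h : IsRotatable T x y x' y') (hT : IsNuTree ν T) {p : ℕ × ℕ}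
    (hp : ∀ t ∈ T, t ≠ (x, y) → Compatible ν p t) (hpq : Incompatible ν p (x, y)) :
    p = (x', y') := by
  obtain ⟨a, b⟩ := p
  have hnorth : Compatible ν (a, b) (x, y') := hp _ h.mem_north (by simp [h.lt_north.ne'])
  have heast : Compatible ν (a, b) (x', y) := hp _ h.mem_east (by simp [h.lt_east.ne'])
  rcases hpq with ⟨hax, hby, hA⟩ | ⟨hxa, hyb, hA⟩
  · exact absurd hA (hnorth.corner_notMem hax (hby.trans h.lt_north))
  · have hb_le : b ≤ y' := by
      by_contra! hb
      exact (symm hnorth).corner_notMem hxa hb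
        (mem_APts_of_le hA le_rfl h.lt_north.le (hT.1 h.mem_north).2.2)
    have ha_le : a ≤ x' := by
      by_contra! ha
      exact (symm heast).corner_notMem ha hyb hA
    have hb_ge : y' ≤ b := by
      by_contra! hb
      exact h.north_gap b hyb hb
        (hT.mem_column_of_compatible h.mem h.mem_north hA hyb hb hp)
    have ha_ge : x' ≤ a := by
      by_contra! ha
      exact h.east_gap a hxa ha (hT.mem_row_of_compatible h.mem hA hxa hyb hp)
    exact Prod.ext (ha_le.antisymm ha_ge) (hb_le.antisymm hb_ge)

theorem isNuTree_rotation (h : IsRotatable T x y x' y') (hT : IsNuTree ν T) :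
    IsNuTree ν (insert (x', y') (T \ {(x, y)})) :=
  hT.exchange (h.corner_mem_APts hT) (h.incompatible hT) (fun _ => h.compatible_corner hT)
    fun _ _ => h.eq_corner_of_incompatible hT

theorem isRightRotation (h : IsRotatable T x y x' y') (hT : IsNuTree ν T) :
    IsRightRotation T (insert (x', y') (T \ {(x, y)})) := by
  have heA := hT.1 h.mem_east
  refine ⟨_, _, x, y, x', y', rfl, rfl, h.lt_east, h.lt_north, h.mem, h.mem_north, h.mem_east,
    h.north_gap, h.east_gap, fun a hxa hax' ha => ?_, fun b hyb _ hb => ?_,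
    Set.union_singleton.symm⟩
  · exact (hT.compatible h.mem ha).corner_notMem hxa h.lt_north
      (mem_APts_of_le heA hax'.le le_rfl heA.2.2)
  · exact (hT.compatible h.mem hb).corner_notMem h.lt_east hyb heA

end IsRotatable

theorem IsRightRotation.ncard_eq {T' : Set (ℕ × ℕ)} (h : IsRightRotation T T')
    (hT : IsNuTree ν T) : T'.ncard = T.ncard := by
  obtain ⟨q, q', x, y, x', y', rfl, rfl, hx, hy, hq, hn, he, hngap, hegap, -, -, rfl⟩ := h
  have hrot : IsRotatable T x y x' y' := ⟨hx, hy, hq, hn, he, hngap, hegap⟩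
  rw [Set.union_singleton, Set.ncard_exchange (hrot.corner_notMem hT) hq]

theorem TreeLE.ncard_eq {T' : Set (ℕ × ℕ)} (h : TreeLE ν T T') : T.ncard = T'.ncard := by
  induction h with
  | refl => rfl
  | tail _ hrot ih => rw [ih, hrot.2.2.ncard_eq hrot.1]

/-! ### Every tree rotates to the maximal one -/

namespace IsNuTree

theorem root_mem (hT : IsNuTree ν T) : (0, northSteps ν) ∈ T := by
  refine hT.mem_of_compatible ⟨Nat.zero_le _, by simp, le_rfl⟩ ?_
  rintro t ht (⟨-, hlt, -⟩ | ⟨hlt, -, -⟩)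
  · exact hlt.not_ge (hT.1 ht).2.2
  · exact absurd hlt (Nat.not_lt_zero _)

theorem exists_mem_north (hT : IsNuTree ν T) (hq : (x, y) ∈ T) (hy : y < northSteps ν)
    (hleft : ∀ c < x, (c, y) ∉ T) : ∃ b, y < b ∧ (x, b) ∈ T := by
  obtain ⟨b, ⟨hyb, c, hcx, hc⟩, hmin⟩ := exists_minimal_of_wellFoundedLT
    (fun b => y < b ∧ ∃ c ≤ x, (c, b) ∈ T) ⟨_, hy, 0, Nat.zero_le x, hT.root_mem⟩
  refine ⟨b, hyb, hT.mem_of_compatible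
    (mem_APts_of_le (hT.1 hq) le_rfl hyb.le (hT.1 hc).2.2) ?_⟩
  rintro ⟨e, f⟩ ht (⟨hxe, hbf, hA⟩ | ⟨hex, hfb, hA⟩)
  · exact (hT.compatible hc ht).corner_notMem (hcx.trans_lt hxe) hbf hA
  · rcases lt_trichotomy f y with hfy | rfl | hyf
    · exact (hT.compatible ht hq).corner_notMem hex hfy hA
    · exact hleft e hex ht
    · exact hfb.not_ge (hmin ⟨hyf, e, hex.le, ht⟩ hfb.le)

theorem exists_mem_east (hT : IsNuTree ν T) (hA : (x + 1, y) ∈ APts ν)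
    (hlow : ∀ p ∈ T, p.2 < y → p ∈ TmaxSet ν) : ∃ a, x < a ∧ (a, y) ∈ T := by
  have hfin : {a | (a, y) ∈ APts ν}.Finite := (Set.finite_Iic (eastSteps ν)).subset fun _ h => h.1
  obtain ⟨a, hxa, haA, hmax⟩ := hfin.exists_le_maximal hA
  refine ⟨a, hxa, hT.mem_of_compatible haA ?_⟩
  rintro ⟨c, d⟩ ht (⟨hac, -, hcA⟩ | ⟨hca, hdy, hdA⟩)
  · exact hac.not_ge (hmax hcA hac.le)
  · exact (mem_TmaxSet_iff.1 (hlow _ ht hdy)).2 (hdy.trans_le hA.2.2)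
      (mem_APts_of_le hdA hca le_rfl hdA.2.2)

theorem exists_isRotatable (hT : IsNuTree ν T) (hne : T ≠ TmaxSet ν) :
    ∃ x y x' y', IsRotatable T x y x' y' := by
  have hbad : ∃ y x, (x, y) ∈ T \ TmaxSet ν := by
    obtain ⟨⟨x, y⟩, hp⟩ := Set.not_subset.1 fun h => hne (hT.eq_TmaxSet_of_subset h)
    exact ⟨y, x, hp⟩
  obtain ⟨y, hy, hymin⟩ := exists_minimal_of_wellFoundedLT _ hbad
  obtain ⟨x, ⟨hq, hqmax⟩, hxmin⟩ := exists_minimal_of_wellFoundedLT _ hy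
  obtain ⟨hyn, hA⟩ : y < northSteps ν ∧ (x + 1, y) ∈ APts ν := by
    simpa [mem_TmaxSet_iff, hT.1 hq] using hqmax
  have hleft (c : ℕ) (hcx : c < x) : (c, y) ∉ T := fun hc =>
    hcx.not_ge (hxmin ⟨hc, fun hcmax => (mem_TmaxSet_iff.1 hcmax).2 hyn
      (mem_APts_of_le hA (by omega) le_rfl hyn.le)⟩ hcx.le)
  have hlow (p : ℕ × ℕ) (hp : p ∈ T) (hpy : p.2 < y) : p ∈ TmaxSet ν := by
    by_contra hpmax
    exact hpy.not_ge (hymin ⟨p.1, hp, hpmax⟩ hpy.le)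
  obtain ⟨y', ⟨hyy', hn⟩, hy'min⟩ :=
    exists_minimal_of_wellFoundedLT _ (hT.exists_mem_north hq hyn hleft)
  obtain ⟨x', ⟨hxx', he⟩, hx'min⟩ :=
    exists_minimal_of_wellFoundedLT _ (hT.exists_mem_east hA hlow)
  exact ⟨x, y, x', y', hxx', hyy', hq, hn, he,
    fun b hyb hby' hb => hby'.not_ge (hy'min ⟨hyb, hb⟩ hby'.le),
    fun a hxa hax' ha => hax'.not_ge (hx'min ⟨hxa, ha⟩ hax'.le)⟩

end IsNuTree

/-- The sum of the distances of the points of `T` to the top row `y = n`, a quantity that decreases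
under right rotations. It is only meaningful for finite `T`, and the subtraction is exact only for
points weakly below the top row. -/
noncomputable def totalDepth (ν : List Bool) (T : Set (ℕ × ℕ)) : ℕ :=
  ∑ᶠ p ∈ T, (northSteps ν - p.2)

theorem IsRotatable.totalDepth_rotation_lt (h : IsRotatable T x y x' y') (hT : IsNuTree ν T) :
    totalDepth ν (insert (x', y') (T \ {(x, y)})) < totalDepth ν T :=
  finsum_mem_insert_sdiff_singleton_lt hT.finite (h.corner_notMem hT) h.mem
    (Nat.sub_lt_sub_left (h.lt_north.trans_le (hT.1 h.mem_north).2.2) h.lt_north)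

theorem IsNuTree.treeLE_TmaxSet (hT : IsNuTree ν T) : TreeLE ν T (TmaxSet ν) := by
  induction hd : totalDepth ν T using Nat.strong_induction_on generalizing T with
  | _ d ih =>
    by_cases hmax : T = TmaxSet ν
    · rw [hmax]
      exact Relation.ReflTransGen.refl
    · obtain ⟨x, y, x', y', hrot⟩ := hT.exists_isRotatable hmax
      have hT' := hrot.isNuTree_rotation hT
      exact Relation.ReflTransGen.head ⟨hT, hT', hrot.isRightRotation hT⟩
        (ih _ (hd ▸ hrot.totalDepth_rotation_lt hT) hT' rfl)

theorem nuTree_reaches_Tmax_and_card (ν : List Bool) (T : Set (ℕ × ℕ))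
    (hT : IsNuTree ν T) :
    Relation.ReflTransGen IsRightRotation T (TmaxSet ν) ∧
      T.ncard = eastSteps ν + northSteps ν + 1 := by
  have hTmax : TreeLE ν T (TmaxSet ν) := hT.treeLE_TmaxSet
  refine ⟨Relation.ReflTransGen.mono (fun _ _ h => h.2.2) _ _ hTmax, ?_⟩
  rw [hTmax.ncard_eq, ncard_TmaxSet]
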